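/- arXiv:1212.6451 — 2 statements merged into one kernel-verified Lean document; each statement's English description precedes it below -/
import Mathlib

section
/- Let Ψ(u) = αu + βu² + ∫_{(0,∞)} (e^{−ux} − 1 + ux) π(dx) be a branching mechanism and let Φ be the unique solution of ∂_t Φ(t,q) = −Ψ(Φ(t,q)), Φ(0,q) = q, for t > 0, q ∈ (0,∞). For t > 0 let Φ(t,∞) = lim_{q→∞} Φ(t,q) ∈ [0,∞] (the limit exists since q ↦ Φ(t,q) is nondecreasing). Then the following are equivalent: (a) Φ(t,∞) < ∞ for some t > 0; (b) Φ(t,∞) < ∞ for all t > 0; (c) Ψ satisfies Grey's condition, i.e. lim_{u→∞} Ψ(u) = ∞ and ∫_a^∞ du/Ψ(u) < ∞ for some a > 0. -/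
open MeasureTheory Set Filter

noncomputable section

/-!
Along `f' = -Ψ(f)`, as long as `Ψ > 0` on the range of `f`, the substitution `u = f(r)` shows that
the time spent travelling from `q` down to `f(t)` is `∫ du / Ψ(u)` over `[f(t), q]`. Hence a bound
on `f(t)` uniform in `q` amounts to convergence of `∫^∞ du / Ψ(u)`. If `Ψ` were bounded above near
infinity, trajectories would descend with bounded speed and could not come down from infinity;
convexity turns this unboundedness of `Ψ` into `Ψ → ∞`.
-/

lemma tendsto_atTop_of_convexOn_of_lt {f : ℝ → ℝ} {x y : ℝ} (hf : ConvexOn ℝ (Ici x) f)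
    (hxy : x < y) (hfxy : f x < f y) : Tendsto f atTop atTop := by
  have hslope : 0 < (f y - f x) / (y - x) := div_pos (sub_pos.2 hfxy) (sub_pos.2 hxy)
  have hsecant : ∀ᶠ z in atTop, f x + (f y - f x) / (y - x) * (z - x) ≤ f z := by
    filter_upwards [eventually_ge_atTop y] with z hyz
    have hxz : x < z := hxy.trans_le hyz
    have := hf.secant_mono self_mem_Ici hxy.le hxz.le hxy.ne' hxz.ne' hyz
    rw [le_div_iff₀ (sub_pos.2 hxz)] at this
    linarith
  refine tendsto_atTop_mono' atTop hsecant (tendsto_atTop_add_const_left _ _ ?_)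
  exact (tendsto_atTop_add_const_right _ (-x) tendsto_id).const_mul_atTop hslope

-- Mathlib's fencing theorems need right derivatives at `s`; strictness at `s` makes up for them.
lemma le_of_lt_left_of_deriv_lt {f f' B B' : ℝ → ℝ} {s t : ℝ} (hst : s ≤ t)
    (hf : ContinuousOn f (Icc s t)) (hf' : ∀ x ∈ Ioo s t, HasDerivAt f (f' x) x)
    (hB : ContinuousOn B (Icc s t)) (hB' : ∀ x ∈ Ioo s t, HasDerivAt B (B' x) x)
    (hs : f s < B s) (hbound : ∀ x ∈ Ioo s t, f x = B x → f' x < B' x) : f t ≤ B t := by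
  obtain rfl | hst := hst.eq_or_lt
  · exact hs.le
  obtain ⟨r, hr, hfr⟩ : ∃ r ∈ Ioo s t, f r < B r := by
    have hnear := (hf s (left_mem_Icc.2 hst.le)).eventually_lt (hB s (left_mem_Icc.2 hst.le)) hs
    rw [nhdsWithin_Icc_eq_nhdsGE hst] at hnear
    have hnear_right := nhdsWithin_mono s Ioi_subset_Ici_self hnear
    exact (Filter.Eventually.and (Ioo_mem_nhdsGT hst) hnear_right).exists
  have hIcc : Icc r t ⊆ Icc s t := Icc_subset_Icc_left hr.1.le
  have hIco : Ico r t ⊆ Ioo s t := fun x hx => ⟨hr.1.trans_le hx.1, hx.2⟩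
  exact image_le_of_deriv_right_lt_deriv_boundary' (hf.mono hIcc)
    (fun x hx => (hf' x (hIco hx)).hasDerivWithinAt) hfr.le (hB.mono hIcc)
    (fun x hx => (hB' x (hIco hx)).hasDerivWithinAt) (fun x hx => hbound x (hIco hx))
    (right_mem_Icc.2 hr.2.le)

/-- A solution `f` of the initial value problem `f' = -Ψ(f)`, `f 0 = q`. The equation is imposed at
positive times only, and `f` is continuous up to time `0`. -/
structure IsTrajectory (Ψ : ℝ → ℝ) (q : ℝ) (f : ℝ → ℝ) : Prop where
  continuousOn : ContinuousOn f (Ici 0)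
  initial : f 0 = q
  hasDerivAt : ∀ t, 0 < t → HasDerivAt f (-Ψ (f t)) t

namespace IsTrajectory

variable {Ψ f : ℝ → ℝ} {a c q s t : ℝ}

lemma continuousOn_Icc (hf : IsTrajectory Ψ q f) (hs : 0 ≤ s) : ContinuousOn f (Icc s t) :=
  hf.continuousOn.mono fun _ hx => hs.trans hx.1

lemma apply_le_of_apply_lt (hf : IsTrajectory Ψ q f) (ha : 0 < Ψ a) (hs : 0 ≤ s) (hst : s ≤ t)
    (hfs : f s < a) : f t ≤ a :=
  le_of_lt_left_of_deriv_lt hst (hf.continuousOn_Icc hs)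
    (fun x hx => hf.hasDerivAt x (hs.trans_lt hx.1)) continuousOn_const
    (fun x _ => hasDerivAt_const x a) hfs (fun x _ hfx => by simpa only [hfx, neg_lt_zero] using ha)

lemma apply_le_apply_of_pos (hf : IsTrajectory Ψ q f) (hpos : ∀ u, c < u → 0 < Ψ u) (hs : 0 ≤ s)
    (hst : s ≤ t) (hft : c < f t) : f t ≤ f s := by
  by_contra! hlt
  obtain ⟨m, hm, hmt⟩ := exists_between (max_lt hlt hft)
  exact hmt.not_ge (hf.apply_le_of_apply_lt (hpos m ((le_max_right _ _).trans_lt hm)) hs hst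
    ((le_max_left _ _).trans_lt hm))

lemma sub_mul_le_apply (hf : IsTrajectory Ψ q f) {C p : ℝ} (hC : 0 ≤ C) (hΨ : ∀ u, a < u → Ψ u < C)
    (ht : 0 ≤ t) (hp : a + C * t < p) (hpq : p < q) : p - C * t ≤ f t := by
  refine le_of_lt_left_of_deriv_lt (f := fun x => p - C * x) (f' := fun _ => -C) ht (by fun_prop)
    (fun x _ => ?_) (hf.continuousOn_Icc le_rfl) (fun x hx => hf.hasDerivAt x hx.1)
    (by simpa only [hf.initial, mul_zero, sub_zero] using hpq) (fun x hx hfx => ?_)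
  · simpa using ((hasDerivAt_id x).const_mul C).const_sub p
  · have : C * x ≤ C * t := mul_le_mul_of_nonneg_left hx.2.le hC
    exact neg_lt_neg (hΨ (f x) (by linarith))

lemma integral_inv_eq (hf : IsTrajectory Ψ q f) (hcont : ContinuousOn Ψ (Ioi c))
    (hpos : ∀ u, c < u → 0 < Ψ u) (ht : 0 ≤ t) (hft : c < f t) :
    ∫ u in f t..q, (Ψ u)⁻¹ = t := by
  have hmaps : MapsTo f (uIcc 0 t) (Ioi c) := by
    rw [uIcc_of_le ht]
    exact fun r hr => hft.trans_le (hf.apply_le_apply_of_pos hpos hr.1 hr.2 hft)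
  have hfcont : ContinuousOn f (uIcc 0 t) := by
    rw [uIcc_of_le ht]
    exact hf.continuousOn_Icc le_rfl
  have hinv : ContinuousOn (fun u => (Ψ u)⁻¹) (Ioi c) := hcont.inv₀ fun u hu => (hpos u hu).ne'
  have hsubst : ∫ r in (0 : ℝ)..t, ((fun u => (Ψ u)⁻¹) ∘ f) r * -Ψ (f r) =
      ∫ u in f 0..f t, (Ψ u)⁻¹ :=
    intervalIntegral.integral_comp_mul_deriv'' hfcont
      (fun r hr => (hf.hasDerivAt r ((le_min le_rfl ht).trans_lt hr.1)).hasDerivWithinAt)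
      (hcont.comp hfcont hmaps).neg (hinv.mono hmaps.image_subset)
  have hspeed : ∀ r ∈ uIcc 0 t, ((fun u => (Ψ u)⁻¹) ∘ f) r * -Ψ (f r) = -1 := fun r hr => by
    rw [Function.comp_apply, mul_neg, inv_mul_cancel₀ (hpos _ (hmaps hr)).ne']
  calc ∫ u in f t..q, (Ψ u)⁻¹
      = -∫ r in (0 : ℝ)..t, ((fun u => (Ψ u)⁻¹) ∘ f) r * -Ψ (f r) := by
        rw [hsubst, hf.initial, intervalIntegral.integral_symm]
    _ = -∫ _ in (0 : ℝ)..t, (-1 : ℝ) := by rw [intervalIntegral.integral_congr hspeed]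
    _ = t := by simp

lemma integral_inv_le (hf : IsTrajectory Ψ q f) (hcont : ContinuousOn Ψ (Ioi c))
    (hpos : ∀ u, c < u → 0 < Ψ u) (hca : c < a) (ht : 0 ≤ t) (haq : a ≤ q) (hfa : f t ≤ a) :
    ∫ u in a..q, (Ψ u)⁻¹ ≤ t := by
  obtain ⟨s, hs, rfl⟩ : a ∈ f '' Icc 0 t :=
    intermediate_value_Icc' ht (hf.continuousOn_Icc le_rfl) ⟨hfa, hf.initial ▸ haq⟩
  rw [hf.integral_inv_eq hcont hpos hs.1 hca]
  exact hs.2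

end IsTrajectory

section Grey

variable {Ψ : ℝ → ℝ} {a c t M : ℝ}

lemma exists_lt_of_eventually_isTrajectory_le (ht : 0 ≤ t)
    (hM : ∀ᶠ q in atTop, ∃ f, IsTrajectory Ψ q f ∧ f t ≤ M) (a C : ℝ) : ∃ u, a < u ∧ C < Ψ u := by
  by_contra! hΨ
  set D := max C 0 + 1
  have hΨD : ∀ u, a < u → Ψ u < D := fun u hu =>
    (hΨ u hu).trans_lt (lt_add_of_le_of_pos (le_max_left _ _) one_pos)
  have hD : 0 ≤ D := add_nonneg (le_max_right _ _) zero_le_one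
  set p := max a M + D * t + 1
  obtain ⟨q, ⟨f, hf, hfM⟩, hpq⟩ := (hM.and (eventually_gt_atTop p)).exists
  have := hf.sub_mul_le_apply hD hΨD ht (by linarith [le_max_left a M]) hpq
  linarith [le_max_right a M]

lemma integrableOn_inv_of_eventually_isTrajectory_le (hcont : ContinuousOn Ψ (Ioi c))
    (hpos : ∀ u, c < u → 0 < Ψ u) (hca : c < a) (ht : 0 ≤ t)
    (ha : ∀ᶠ q in atTop, ∃ f, IsTrajectory Ψ q f ∧ f t ≤ a) :
    IntegrableOn (fun u => (Ψ u)⁻¹) (Ioi a) := by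
  have hIci : Ici a ⊆ Ioi c := Ici_subset_Ioi.2 hca
  have hinv : ContinuousOn (fun u => (Ψ u)⁻¹) (Ici a) :=
    (hcont.mono hIci).inv₀ fun u hu => (hpos u (hIci hu)).ne'
  refine integrableOn_Ioi_of_intervalIntegral_norm_bounded t a (fun q => ?_) tendsto_id ?_
  · exact ((hinv.mono Icc_subset_Ici_self).integrableOn_Icc).mono_set Ioc_subset_Icc_self
  filter_upwards [ha, eventually_ge_atTop a] with q ⟨f, hf, hfa⟩ haq
  have hnorm : ∀ u ∈ uIcc a q, ‖(Ψ u)⁻¹‖ = (Ψ u)⁻¹ := fun u hu => by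
    rw [uIcc_of_le haq] at hu
    exact Real.norm_of_nonneg (inv_pos.2 (hpos u (hIci hu.1))).le
  exact (intervalIntegral.integral_congr hnorm).trans_le
    (hf.integral_inv_le hcont hpos hca ht haq hfa)

lemma exists_forall_isTrajectory_le_of_integrableOn_inv (hcont : ContinuousOn Ψ (Ioi c))
    (hpos : ∀ u, c < u → 0 < Ψ u) (hint : IntegrableOn (fun u => (Ψ u)⁻¹) (Ioi c)) (ht : 0 < t) :
    ∃ M, ∀ q f, IsTrajectory Ψ q f → f t ≤ M := by
  obtain ⟨M, hMt, hcM⟩ : ∃ M, ∫ u in Ioi M, (Ψ u)⁻¹ < t ∧ c < M :=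
    (((tendsto_integral_Ioi_zero tendsto_id).eventually_lt_const ht).and
      (eventually_gt_atTop c)).exists
  refine ⟨M, fun q f hf => ?_⟩
  by_contra! hMf
  have hcf : c < f t := hcM.trans hMf
  have hfq : f t ≤ q := hf.initial ▸ hf.apply_le_apply_of_pos hpos le_rfl ht.le hcf
  have htail : ∫ u in f t..q, (Ψ u)⁻¹ ≤ ∫ u in Ioi M, (Ψ u)⁻¹ := by
    rw [intervalIntegral.integral_of_le hfq]
    refine setIntegral_mono_set (hint.mono_set (Ioi_subset_Ioi hcM.le)) ?_
      (Ioc_subset_Ioi_self.trans (Ioi_subset_Ioi hMf.le)).eventuallyLE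
    filter_upwards [ae_restrict_mem measurableSet_Ioi] with u hu
    exact (inv_pos.2 (hpos u (hcM.trans hu))).le
  rw [hf.integral_inv_eq hcont hpos ht.le hcf] at htail
  exact htail.not_gt hMt

lemma grey_of_eventually_isTrajectory_le (hΨ : ConvexOn ℝ (Ioi c) Ψ) (ht : 0 ≤ t)
    (hM : ∀ᶠ q in atTop, ∃ f, IsTrajectory Ψ q f ∧ f t ≤ M) :
    Tendsto Ψ atTop atTop ∧ ∃ a, c < a ∧ IntegrableOn (fun u => (Ψ u)⁻¹) (Ioi a) := by
  have hΨtop : Tendsto Ψ atTop atTop := by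
    obtain ⟨y, hxy, hΨxy⟩ := exists_lt_of_eventually_isTrajectory_le ht hM (c + 1) (Ψ (c + 1))
    exact tendsto_atTop_of_convexOn_of_lt
      (hΨ.subset (Ici_subset_Ioi.2 (lt_add_one c)) (convex_Ici _)) hxy hΨxy
  obtain ⟨b, hb⟩ := eventually_atTop.1 (hΨtop.eventually_gt_atTop 0)
  set d := max b c
  have hd : ∀ u, d < u → 0 < Ψ u := fun u hu => hb u ((le_max_left b c).trans hu.le)
  have hcont : ContinuousOn Ψ (Ioi d) :=
    (hΨ.continuousOn isOpen_Ioi).mono (Ioi_subset_Ioi (le_max_right b c))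
  obtain ⟨a, hda, hMa⟩ : ∃ a, d < a ∧ M ≤ a :=
    ((eventually_gt_atTop d).and (eventually_ge_atTop M)).exists
  refine ⟨hΨtop, a, (le_max_right b c).trans_lt hda, ?_⟩
  exact integrableOn_inv_of_eventually_isTrajectory_le hcont hd hda ht
    (hM.mono fun q ⟨f, hf, hfM⟩ => ⟨f, hf, hfM.trans hMa⟩)

lemma exists_forall_isTrajectory_le_of_grey (hΨ : ContinuousOn Ψ (Ioi a))
    (hΨtop : Tendsto Ψ atTop atTop) (hint : IntegrableOn (fun u => (Ψ u)⁻¹) (Ioi a)) (ht : 0 < t) :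
    ∃ M, ∀ q f, IsTrajectory Ψ q f → f t ≤ M := by
  obtain ⟨b, hb⟩ := eventually_atTop.1 (hΨtop.eventually_gt_atTop 0)
  have htail : Ioi (max a b) ⊆ Ioi a := Ioi_subset_Ioi (le_max_left a b)
  exact exists_forall_isTrajectory_le_of_integrableOn_inv (hΨ.mono htail)
    (fun u hu => hb u ((le_max_right a b).trans hu.le)) (hint.mono_set htail) ht

theorem extinction_iff_Grey_general {Φ : ℝ → ℝ → ℝ} (hΨ : ConvexOn ℝ (Ioi c) Ψ)
    (hΦ : ∀ q, c < q → IsTrajectory Ψ q fun t => Φ t q) :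
    ((∃ t, 0 < t ∧ ∃ M, ∀ q, c < q → Φ t q ≤ M) ↔ ∀ t, 0 < t → ∃ M, ∀ q, c < q → Φ t q ≤ M) ∧
    ((∃ t, 0 < t ∧ ∃ M, ∀ q, c < q → Φ t q ≤ M) ↔
      Tendsto Ψ atTop atTop ∧ ∃ a, c < a ∧ IntegrableOn (fun u => (Ψ u)⁻¹) (Ioi a)) := by
  have grey_of_bounded : (∃ t, 0 < t ∧ ∃ M, ∀ q, c < q → Φ t q ≤ M) →
      Tendsto Ψ atTop atTop ∧ ∃ a, c < a ∧ IntegrableOn (fun u => (Ψ u)⁻¹) (Ioi a) := by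
    rintro ⟨t, ht, M, hM⟩
    exact grey_of_eventually_isTrajectory_le hΨ ht.le
      ((eventually_gt_atTop c).mono fun q hq => ⟨_, hΦ q hq, hM q hq⟩)
  have bounded_of_grey :
      (Tendsto Ψ atTop atTop ∧ ∃ a, c < a ∧ IntegrableOn (fun u => (Ψ u)⁻¹) (Ioi a)) →
      ∀ t, 0 < t → ∃ M, ∀ q, c < q → Φ t q ≤ M := by
    rintro ⟨hΨtop, a, hca, hint⟩ t ht
    have hcont : ContinuousOn Ψ (Ioi a) :=
      (hΨ.continuousOn isOpen_Ioi).mono (Ioi_subset_Ioi hca.le)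
    obtain ⟨M, hM⟩ := exists_forall_isTrajectory_le_of_grey hcont hΨtop hint ht
    exact ⟨M, fun q hq => hM q _ (hΦ q hq)⟩
  exact ⟨⟨fun h => bounded_of_grey (grey_of_bounded h), fun h => ⟨1, one_pos, h 1 one_pos⟩⟩,
    grey_of_bounded, fun h => ⟨1, one_pos, bounded_of_grey h 1 one_pos⟩⟩

end Grey

section BranchingMechanism

lemma exp_neg_sub_one_add_nonneg (y : ℝ) : 0 ≤ Real.exp (-y) - 1 + y := by
  linarith [Real.one_sub_le_exp_neg y]

lemma exp_neg_sub_one_add_le_min {y : ℝ} (hy : 0 ≤ y) :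
    Real.exp (-y) - 1 + y ≤ min y (y ^ 2) := by
  have hle : Real.exp (-y) - 1 + y ≤ y := by
    linarith [Real.exp_le_one_iff.2 (neg_nonpos.2 hy)]
  refine le_min hle ?_
  obtain hy1 | hy1 := le_total y 1
  · have := Real.abs_exp_sub_one_sub_id_le (x := -y) (by rwa [abs_neg, abs_of_nonneg hy])
    rw [neg_sq, sub_neg_eq_add] at this
    exact (le_abs_self _).trans this
  · exact hle.trans (le_self_pow₀ hy1 two_ne_zero)

lemma exp_neg_mul_sub_one_add_mul_le {u x : ℝ} (hu : 0 ≤ u) (hx : 0 ≤ x) :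
    Real.exp (-(u * x)) - 1 + u * x ≤ max u (u ^ 2) * min x (x ^ 2) := by
  refine (exp_neg_sub_one_add_le_min (mul_nonneg hu hx)).trans ?_
  rw [mul_min_of_nonneg _ _ (le_max_of_le_left hu), mul_pow]
  gcongr
  · exact le_max_left _ _
  · exact le_max_right _ _

lemma convexOn_exp_neg_mul_sub_one_add_mul (x : ℝ) :
    ConvexOn ℝ univ fun u : ℝ => Real.exp (-(u * x)) - 1 + u * x := by
  have hexp : ConvexOn ℝ univ fun u : ℝ => Real.exp (-x * u) :=
    convexOn_exp.comp_linearMap (LinearMap.mul ℝ ℝ (-x))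
  have hlin : ConvexOn ℝ univ fun u : ℝ => x * u := (LinearMap.mul ℝ ℝ x).convexOn convex_univ
  exact ((hexp.add hlin).add_const (-1)).congr fun u _ => by
    simp only [Pi.add_apply]
    ring_nf

variable {π : Measure ℝ}

lemma integrableOn_exp_neg_mul_sub_one_add_mul
    (hπ : ∫⁻ x in Ioi 0, ENNReal.ofReal (min x (x ^ 2)) ∂π < ⊤) {u : ℝ} (hu : 0 ≤ u) :
    IntegrableOn (fun x => Real.exp (-(u * x)) - 1 + u * x) (Ioi 0) π := by
  have hmin_nonneg : 0 ≤ᵐ[π.restrict (Ioi 0)] fun x : ℝ => min x (x ^ 2) := by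
    filter_upwards [ae_restrict_mem measurableSet_Ioi] with x (hx : 0 < x)
    exact le_min hx.le (sq_nonneg x)
  have hmin : IntegrableOn (fun x : ℝ => min x (x ^ 2)) (Ioi 0) π :=
    ⟨by fun_prop, (hasFiniteIntegral_iff_ofReal hmin_nonneg).2 hπ⟩
  refine Integrable.mono' (hmin.const_mul (max u (u ^ 2))) (by fun_prop) ?_
  filter_upwards [ae_restrict_mem measurableSet_Ioi] with x (hx : 0 < x)
  rw [Real.norm_of_nonneg (exp_neg_sub_one_add_nonneg _)]
  exact exp_neg_mul_sub_one_add_mul_le hu hx.le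

lemma convexOn_branchingMechanism (α : ℝ) {β : ℝ} (hβ : 0 ≤ β)
    (hπ : ∫⁻ x in Ioi 0, ENNReal.ofReal (min x (x ^ 2)) ∂π < ⊤) :
    ConvexOn ℝ (Ici 0) fun u => α * u + β * u ^ 2 +
      ∫ x in Ioi (0 : ℝ), (Real.exp (-(u * x)) - 1 + u * x) ∂π := by
  have hlin : ConvexOn ℝ (Ici 0) fun u : ℝ => α * u :=
    (LinearMap.mul ℝ ℝ α).convexOn (convex_Ici 0)
  have hquad : ConvexOn ℝ (Ici 0) fun u : ℝ => β * u ^ 2 := (convexOn_pow 2).smul hβ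
  have hjump : ConvexOn ℝ (Ici 0) fun u : ℝ =>
      ∫ x in Ioi (0 : ℝ), (Real.exp (-(u * x)) - 1 + u * x) ∂π :=
    integral_convexOn_of_integrand_ae (convex_Ici 0)
      (Eventually.of_forall fun x =>
        (convexOn_exp_neg_mul_sub_one_add_mul x).subset (subset_univ _) (convex_Ici 0))
      fun u hu => integrableOn_exp_neg_mul_sub_one_add_mul hπ hu
  exact (hlin.add hquad).add hjump

end BranchingMechanism

/-- for the backward flow `Φ` of a branching mechanism `Ψ`,
`Φ(t,∞) < ∞` (i.e. `q ↦ Φ(t,q)` is bounded above) for some `t > 0` iff for all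
`t > 0`, iff `Ψ` satisfies Grey's condition. -/
theorem extinction_iff_Grey
    (Ψ : ℝ → ℝ) (α β : ℝ) (π : Measure ℝ)
    (hβ : 0 ≤ β)
    (hπfin : ∫⁻ x in Ioi (0:ℝ), ENNReal.ofReal (min x (x ^ 2)) ∂π < ⊤)
    (hΨ : ∀ u : ℝ, 0 < u →
      Ψ u = α * u + β * u ^ 2 + ∫ x in Ioi (0:ℝ), (Real.exp (-(u * x)) - 1 + u * x) ∂π)
    (Φ : ℝ → ℝ → ℝ)
    (hΦcont : ∀ q : ℝ, 0 < q → ContinuousOn (fun t => Φ t q) (Ici 0))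
    (hΦinit : ∀ q : ℝ, 0 < q → Φ 0 q = q)
    (hΦode : ∀ q : ℝ, 0 < q → ∀ t : ℝ, 0 < t →
      HasDerivAt (fun s => Φ s q) (-Ψ (Φ t q)) t) :
    ((∃ t : ℝ, 0 < t ∧ ∃ M : ℝ, ∀ q : ℝ, 0 < q → Φ t q ≤ M) ↔
      (∀ t : ℝ, 0 < t → ∃ M : ℝ, ∀ q : ℝ, 0 < q → Φ t q ≤ M)) ∧
    ((∃ t : ℝ, 0 < t ∧ ∃ M : ℝ, ∀ q : ℝ, 0 < q → Φ t q ≤ M) ↔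
      (Tendsto Ψ atTop atTop ∧
        ∃ a : ℝ, 0 < a ∧ IntegrableOn (fun u => (Ψ u)⁻¹) (Ioi a))) := by
  have hconv : ConvexOn ℝ (Ioi 0) Ψ :=
    ((convexOn_branchingMechanism α hβ hπfin).subset Ioi_subset_Ici_self (convex_Ioi 0)).congr
      fun u hu => (hΨ u hu).symm
  exact extinction_iff_Grey_general hconv fun q hq => ⟨hΦcont q hq, hΦinit q hq, hΦode q hq⟩
end
end

section
/- Let 1 < γ ≤ 2, β > 0 and 0 < ρ ≤ 1. Then there exists a Borel probability measure F on (0,∞) with ∫_{(0,∞)} (1 − e^{−qx}) F(dx) = (1 + q^{−ρ(γ−1)})^{−1/(γ−1)} for all q > 0. Moreover, setting a(t) = [(γ−1)βt]^{1/(1−γ)} for t > 0 and defining the finite measures μ_t(A) = a(t) · F({a(t)^{1/ρ} x : x ∈ A}) for Borel sets A ⊆ (0,∞), one has ∫_{(0,∞)} (1 − e^{−qx}) μ_t(dx) = [(γ−1)βt + q^{−ρ(γ−1)}]^{−1/(γ−1)} for all t, q > 0; in particular this function φ(t,q) satisfies ∂_t φ = −β φ^γ with lim_{t→0⁺} φ(t,q)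 = q^ρ. -/
open MeasureTheory Set Filter Real

noncomputable section

/-! A law on `(0, ∞)` is handled through its Laplace transform `E[exp (-q X)]`. For `0 < ρ < 1` the
function `g q = (1 + q) ^ ρ - q ^ ρ` is such a transform, and `1 - g q ~ q ^ ρ` at `0` puts its law
in the domain of attraction of the `ρ`-stable law, whose transform `exp (-q ^ ρ)` is the limit of
`g (n ^ (-1 / ρ) q) ^ n`. Hence `L (q ^ ρ)` is a transform whenever `L` is.

With `α = γ - 1`, this turns the gamma transform `(1 + q) ^ (-(1 + 1 / α))` into
`(1 + q ^ α) ^ (-(1 + 1 / α))`, which is the derivative of the function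
`(1 + q ^ (-α)) ^ (-1 / α) = q * (1 + q ^ α) ^ (-1 / α)`, increasing from `0` at `0` to `1` at
infinity. Dividing the corresponding law by `x` therefore gives the transform
`1 - (1 + q ^ (-α)) ^ (-1 / α)`, and substituting `q ^ ρ` for `q` gives that of `F`. -/

open ProbabilityTheory Topology

/-- The Laplace transforms `q ↦ E[exp (-q X)]` of random variables `X > 0`. The law of `X` is
encoded as a measure on `ℝ`, and the values of `L` outside `(0, ∞)` are ignored. -/
def IsLaplaceTransform (L : ℝ → ℝ) : Prop :=
  ∃ μ : Measure ℝ, IsProbabilityMeasure μ ∧ (∀ᵐ x ∂μ, 0 < x) ∧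
    ∀ q : ℝ, 0 < q → ∫ x, exp (-(q * x)) ∂μ = L q

lemma integrable_exp_neg_mul {Ω : Type*} [MeasurableSpace Ω] {P : Measure Ω} [IsFiniteMeasure P]
    {X : Ω → ℝ} (hX : AEMeasurable X P) (hX_nonneg : ∀ᵐ ω ∂P, 0 ≤ X ω) {q : ℝ} (hq : 0 ≤ q) :
    Integrable (fun ω ↦ exp (-(q * X ω))) P := by
  refine Integrable.of_bound (by fun_prop) 1 ?_
  filter_upwards [hX_nonneg] with ω hω
  rw [norm_of_nonneg (exp_pos _).le, exp_le_one_iff, neg_nonpos]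
  exact mul_nonneg hq hω

lemma isLaplaceTransform_integral {Ω : Type*} [MeasurableSpace Ω] {P : Measure Ω}
    [IsProbabilityMeasure P] {X : Ω → ℝ} (hX : AEMeasurable X P) (hX_pos : ∀ᵐ ω ∂P, 0 < X ω) :
    IsLaplaceTransform fun q ↦ ∫ ω, exp (-(q * X ω)) ∂P :=
  ⟨P.map X, Measure.isProbabilityMeasure_map hX, (ae_map_iff hX measurableSet_Ioi).2 hX_pos,
    fun _ _ ↦ integral_map hX (by fun_prop)⟩

lemma tendsto_mul_one_sub_comp_mul_rpow {g : ℝ → ℝ} {ρ c : ℝ} (hρ : 0 < ρ) (hc : 0 < c)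
    (hg : Tendsto (fun q ↦ (1 - g q) / q ^ ρ) (𝓝[>] 0) (𝓝 c)) {q : ℝ} (hq : 0 < q) :
    Tendsto (fun n : ℕ ↦ (n : ℝ) * (g (((n : ℝ) * c) ^ (-ρ⁻¹) * q) - 1)) atTop (𝓝 (-q ^ ρ)) := by
  have h_scale : Tendsto (fun n : ℕ ↦ ((n : ℝ) * c) ^ (-ρ⁻¹) * q) atTop (𝓝[>] 0) := by
    refine tendsto_nhdsWithin_iff.2 ⟨?_, ?_⟩
    · simpa only [Function.comp_def, zero_mul] using ((tendsto_rpow_neg_atTop (inv_pos.2 hρ)).comp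
        (tendsto_natCast_atTop_atTop.atTop_mul_const hc)).mul_const q
    · filter_upwards [eventually_gt_atTop 0] with n hn
      have : (0 : ℝ) < n := Nat.cast_pos.2 hn
      exact mem_Ioi.2 (by positivity)
  have h_lim := ((hg.comp h_scale).mul_const (-(q ^ ρ / c)))
  rw [show c * -(q ^ ρ / c) = -q ^ ρ by field_simp] at h_lim
  refine h_lim.congr' ?_
  filter_upwards [eventually_gt_atTop 0] with n hn
  have : (0 : ℝ) < n := Nat.cast_pos.2 hn
  have h_pow : (((n : ℝ) * c) ^ (-ρ⁻¹) * q) ^ ρ = q ^ ρ / (n * c) := by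
    rw [mul_rpow (by positivity) hq.le, ← rpow_mul (by positivity), neg_mul,
      inv_mul_cancel₀ hρ.ne', rpow_neg_one, inv_mul_eq_div]
  rw [Function.comp_apply, h_pow]
  field_simp
  ring

namespace IsLaplaceTransform

variable {L M : ℝ → ℝ}

lemma congr (hL : IsLaplaceTransform L) (h : ∀ q, 0 < q → L q = M q) : IsLaplaceTransform M := by
  obtain ⟨μ, hμ, hμ_pos, hμL⟩ := hL
  exact ⟨μ, hμ, hμ_pos, fun q hq ↦ (hμL q hq).trans (h q hq)⟩

lemma comp_const_mul (hL : IsLaplaceTransform L) {c : ℝ} (hc : 0 < c) :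
    IsLaplaceTransform fun q ↦ L (c * q) := by
  obtain ⟨μ, _, hμ_pos, hμL⟩ := hL
  refine (isLaplaceTransform_integral (X := fun x ↦ c * x) (P := μ) (by fun_prop) ?_).congr
    fun q hq ↦ ?_
  · filter_upwards [hμ_pos] with x hx using mul_pos hc hx
  · simp only [← hμL _ (mul_pos hc hq), mul_assoc, mul_left_comm q]

lemma mul (hL : IsLaplaceTransform L) (hM : IsLaplaceTransform M) :
    IsLaplaceTransform fun q ↦ L q * M q := by
  obtain ⟨μ, _, hμ_pos, hμL⟩ := hL
  obtain ⟨ν, _, hν_pos, hνM⟩ := hM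
  refine (isLaplaceTransform_integral (X := fun p : ℝ × ℝ ↦ p.1 + p.2) (P := μ.prod ν)
    (by fun_prop) ?_).congr fun q hq ↦ ?_
  · filter_upwards [Measure.quasiMeasurePreserving_fst.ae hμ_pos,
      Measure.quasiMeasurePreserving_snd.ae hν_pos] with p h₁ h₂ using add_pos h₁ h₂
  · simp only [mul_add, neg_add, exp_add, ← hμL q hq, ← hνM q hq, ← integral_prod_mul]

lemma pow_succ (hL : IsLaplaceTransform L) (n : ℕ) : IsLaplaceTransform fun q ↦ L q ^ (n + 1) := by
  induction n with
  | zero => simpa only [zero_add, pow_one] using hL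
  | succ n ih => simpa only [_root_.pow_succ _ (n + 1)] using ih.mul hL

lemma integral_comp_mul (hL : IsLaplaceTransform L) {Ω : Type*} [MeasurableSpace Ω] {P : Measure Ω}
    [IsProbabilityMeasure P] {Y : Ω → ℝ} (hY : Measurable Y) (hY_pos : ∀ᵐ ω ∂P, 0 < Y ω) :
    IsLaplaceTransform fun q ↦ ∫ ω, L (q * Y ω) ∂P := by
  obtain ⟨μ, _, hμ_pos, hμL⟩ := hL
  have h_meas : Measurable fun p : Ω × ℝ ↦ Y p.1 * p.2 := by fun_prop
  have h_pos : ∀ᵐ p ∂P.prod μ, 0 < Y p.1 * p.2 := by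
    filter_upwards [Measure.quasiMeasurePreserving_fst.ae hY_pos,
      Measure.quasiMeasurePreserving_snd.ae hμ_pos] with p h₁ h₂ using mul_pos h₁ h₂
  refine (isLaplaceTransform_integral h_meas.aemeasurable h_pos).congr fun q hq ↦ ?_
  rw [integral_prod _
    (integrable_exp_neg_mul h_meas.aemeasurable (h_pos.mono fun _ ↦ le_of_lt) hq.le)]
  refine integral_congr_ae ?_
  filter_upwards [hY_pos] with ω hω
  simp only [← hμL _ (mul_pos hq hω), mul_assoc]

end IsLaplaceTransform

lemma measure_lt_norm_le_ofReal_integral_exp {μ : Measure ℝ} [IsProbabilityMeasure μ]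
    (hμ_nonneg : ∀ᵐ x ∂μ, 0 ≤ x) {r : ℝ} (hr : 0 < r) :
    μ {x | r < ‖x‖} ≤
      ENNReal.ofReal ((1 - ∫ x, exp (-(r⁻¹ * x)) ∂μ) / (1 - exp (-1))) := by
  have h_exp : 0 < 1 - exp (-1) := by simp
  have h_int : Integrable (fun x ↦ exp (-(r⁻¹ * x))) μ :=
    integrable_exp_neg_mul aemeasurable_id hμ_nonneg (inv_nonneg.2 hr.le)
  have h_markov := mul_meas_ge_le_integral_of_nonneg (μ := μ) (f := fun x ↦ 1 - exp (-(r⁻¹ * x)))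
    (by
      filter_upwards [hμ_nonneg] with x hx
      have : 0 ≤ r⁻¹ * x := by positivity
      simpa using this) ((integrable_const 1).sub h_int) (1 - exp (-1))
  rw [integral_sub (integrable_const 1) h_int] at h_markov
  simp only [integral_const, probReal_univ, smul_eq_mul, mul_one] at h_markov
  rw [← ofReal_measureReal]
  refine ENNReal.ofReal_le_ofReal ?_
  rw [le_div_iff₀' h_exp]
  refine le_trans ?_ h_markov
  gcongr ?_ * ?_
  refine ENNReal.toReal_mono (measure_ne_top _ _) (measure_mono_ae ?_)
  filter_upwards [hμ_nonneg] with x hx (h : r < ‖x‖)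
  rw [norm_of_nonneg hx] at h
  have : 1 ≤ r⁻¹ * x := by rw [← div_eq_inv_mul, one_le_div hr]; exact h.le
  change 1 - exp (-1) ≤ 1 - exp (-(r⁻¹ * x))
  gcongr

lemma isTightMeasureSet_range_of_tendsto_integral_exp {μ : ℕ → Measure ℝ}
    [∀ n, IsProbabilityMeasure (μ n)] (hμ_nonneg : ∀ n, ∀ᵐ x ∂μ n, 0 ≤ x) {M : ℝ → ℝ}
    (hμM : ∀ q, 0 < q → Tendsto (fun n ↦ ∫ x, exp (-(q * x)) ∂μ n) atTop (𝓝 (M q)))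
    (hM : Tendsto M (𝓝[>] 0) (𝓝 1)) :
    IsTightMeasureSet (range μ) := by
  refine isTightMeasureSet_range_of_tendsto_limsup_measure_norm_gt ?_
  have h_lim : Tendsto (fun r : ℝ ↦ ENNReal.ofReal ((1 - M r⁻¹) / (1 - exp (-1)))) atTop
      (𝓝 0) := by
    simpa only [Function.comp_def, sub_self, zero_div, ENNReal.ofReal_zero] using
      ENNReal.tendsto_ofReal
        (((hM.comp tendsto_inv_atTop_nhdsGT_zero).const_sub 1).div_const (1 - exp (-1)))
  refine tendsto_of_tendsto_of_tendsto_of_le_of_le' tendsto_const_nhds h_lim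
    (Eventually.of_forall fun _ ↦ zero_le) ?_
  filter_upwards [eventually_gt_atTop 0] with r hr
  have h_bound := ENNReal.tendsto_ofReal
    (((hμM r⁻¹ (inv_pos.2 hr)).const_sub 1).div_const (1 - exp (-1)))
  rw [← h_bound.limsup_eq]
  exact limsup_le_limsup
    (Eventually.of_forall fun n ↦ measure_lt_norm_le_ofReal_integral_exp (hμ_nonneg n) hr)

lemma exists_mapClusterPt_of_isTightMeasureSet {E ι : Type*} [TopologicalSpace E] [T2Space E]
    [MeasurableSpace E] [BorelSpace E] {l : Filter ι} [l.NeBot] {μ : ι → ProbabilityMeasure E}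
    (hμ : IsTightMeasureSet (range fun i ↦ (μ i : Measure E))) : ∃ ν, MapClusterPt ν l μ := by
  have h_compact : IsCompact (closure (range μ)) := by
    refine isCompact_closure_of_isTightMeasureSet ?_
    convert hμ
    ext; simp
  obtain ⟨ν, -, hν⟩ := h_compact.exists_mapClusterPt (f := l) (u := μ)
    (tendsto_principal.2 (Eventually.of_forall fun i ↦ subset_closure (mem_range_self i)))
  exact ⟨ν, hν⟩

lemma integral_eq_of_mapClusterPt {E ι : Type*} [TopologicalSpace E] [MeasurableSpace E]
    [OpensMeasurableSpace E] {l : Filter ι} {μ : ι → ProbabilityMeasure E}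
    {ν : ProbabilityMeasure E} (hν : MapClusterPt ν l μ) (f : BoundedContinuousFunction E ℝ) {c : ℝ}
    (hf : Tendsto (fun i ↦ ∫ x, f x ∂(μ i : Measure E)) l (𝓝 c)) :
    ∫ x, f x ∂(ν : Measure E) = c := by
  have h_cluster : MapClusterPt (∫ x, f x ∂(ν : Measure E)) l fun i ↦ ∫ x, f x ∂(μ i : Measure E) :=
    hν.continuousAt_comp (f := fun κ : ProbabilityMeasure E ↦ ∫ x, f x ∂(κ : Measure E))
      (ProbabilityMeasure.continuous_integral_boundedContinuousFunction f).continuousAt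
  exact eq_of_nhds_neBot (ClusterPt.mono h_cluster hf)

lemma ae_ne_zero_of_tendsto_integral_exp {Ω : Type*} [MeasurableSpace Ω] {P : Measure Ω}
    [IsFiniteMeasure P] {X : Ω → ℝ} (hX : AEMeasurable X P) (hX_nonneg : ∀ᵐ ω ∂P, 0 ≤ X ω)
    (h : Tendsto (fun q ↦ ∫ ω, exp (-(q * X ω)) ∂P) atTop (𝓝 0)) : ∀ᵐ ω ∂P, X ω ≠ 0 := by
  have h_bound : ∀ᶠ q in atTop, P.real {ω | X ω = 0} ≤ ∫ ω, exp (-(q * X ω)) ∂P := by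
    filter_upwards [eventually_ge_atTop 0] with q hq
    refine le_trans (measureReal_mono fun ω (hω : X ω = 0) ↦ ?_)
      ((one_mul _).symm.trans_le (mul_meas_ge_le_integral_of_nonneg
        (ae_of_all _ fun ω ↦ (exp_pos (-(q * X ω))).le) (integrable_exp_neg_mul hX hX_nonneg hq) 1))
    simp [hω]
  rw [ae_iff]
  simp only [not_not]
  rw [← measureReal_eq_zero_iff]
  exact le_antisymm (ge_of_tendsto h h_bound) measureReal_nonneg

/-- The Laplace kernel `x ↦ exp (-q |x|)` as a test function for weak convergence; the absolute
value keeps it bounded on all of `ℝ`. -/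
def expNegAbs (q : ℝ) (hq : 0 ≤ q) : BoundedContinuousFunction ℝ ℝ :=
  .ofNormedAddCommGroup (fun x ↦ exp (-(q * |x|))) (by fun_prop) 1 fun x ↦ by
    rw [norm_of_nonneg (exp_pos _).le, exp_le_one_iff, neg_nonpos]
    positivity

namespace IsLaplaceTransform

lemma of_tendsto {L : ℕ → ℝ → ℝ} {M : ℝ → ℝ} (hL : ∀ n, IsLaplaceTransform (L n))
    (hLM : ∀ q, 0 < q → Tendsto (fun n ↦ L n q) atTop (𝓝 (M q)))
    (hM_zero : Tendsto M (𝓝[>] 0) (𝓝 1)) (hM_top : Tendsto M atTop (𝓝 0)) :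
    IsLaplaceTransform M := by
  choose μ hμ hμ_pos hμL using hL
  have hμ_nonneg (n) : ∀ᵐ x ∂μ n, 0 ≤ x := (hμ_pos n).mono fun _ ↦ le_of_lt
  have h_tight : IsTightMeasureSet (range μ) :=
    isTightMeasureSet_range_of_tendsto_integral_exp hμ_nonneg
      (fun q hq ↦ by simpa only [hμL _ q hq] using hLM q hq) hM_zero
  obtain ⟨ν, hν⟩ :=
    exists_mapClusterPt_of_isTightMeasureSet (l := atTop) (μ := fun n ↦ ⟨μ n, hμ n⟩) h_tight
  have hνM (q : ℝ) (hq : 0 < q) : ∫ x, exp (-(q * |x|)) ∂(ν : Measure ℝ) = M q := by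
    refine integral_eq_of_mapClusterPt hν (expNegAbs q hq.le) ((hLM q hq).congr fun n ↦ ?_)
    rw [← hμL n q hq]
    refine integral_congr_ae ?_
    filter_upwards [hμ_nonneg n] with x hx
    exact (congrArg (fun y ↦ exp (-(q * y))) (abs_of_nonneg hx)).symm
  have hν_ne : ∀ᵐ x ∂(ν : Measure ℝ), |x| ≠ 0 := by
    refine ae_ne_zero_of_tendsto_integral_exp (by fun_prop) (ae_of_all _ abs_nonneg)
      (hM_top.congr' ?_)
    filter_upwards [eventually_gt_atTop 0] with q hq using (hνM q hq).symm
  refine (isLaplaceTransform_integral (P := (ν : Measure ℝ)) (X := fun x ↦ |x|) (by fun_prop)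
    ?_).congr hνM
  filter_upwards [hν_ne] with x hx using (abs_nonneg x).lt_of_ne' hx

lemma exp_neg_rpow_of_tendsto {g : ℝ → ℝ} (hg : IsLaplaceTransform g) {ρ c : ℝ} (hρ : 0 < ρ)
    (hc : 0 < c) (hgc : Tendsto (fun q ↦ (1 - g q) / q ^ ρ) (𝓝[>] 0) (𝓝 c)) :
    IsLaplaceTransform fun q ↦ exp (-q ^ ρ) := by
  refine of_tendsto (L := fun n q ↦ g ((((n + 1 : ℕ) : ℝ) * c) ^ (-ρ⁻¹) * q) ^ (n + 1))
    (fun n ↦ (hg.comp_const_mul (by positivity)).pow_succ n) (fun q hq ↦ ?_) ?_ ?_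
  · have h := tendsto_one_add_pow_exp_of_tendsto (tendsto_mul_one_sub_comp_mul_rpow hρ hc hgc hq)
    simpa only [Function.comp_def, add_sub_cancel] using h.comp (tendsto_add_atTop_nat 1)
  · have h : Continuous fun q : ℝ ↦ exp (-q ^ ρ) := by
      have := continuous_rpow_const hρ.le
      fun_prop
    simpa [zero_rpow hρ.ne'] using (h.tendsto 0).mono_left nhdsWithin_le_nhds
  · exact tendsto_exp_neg_atTop_nhds_zero.comp (tendsto_rpow_atTop hρ)

end IsLaplaceTransform

lemma lintegral_Ioi_exp_neg_mul {x : ℝ} (hx : 0 < x) (q : ℝ) :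
    ∫⁻ u in Ioi q, ENNReal.ofReal (exp (-(u * x))) =
      ENNReal.ofReal x⁻¹ * ENNReal.ofReal (exp (-(q * x))) := by
  have h_neg : -x < 0 := neg_neg_of_pos hx
  simp only [← mul_neg, mul_comm _ (-x)]
  rw [← ofReal_integral_eq_lintegral_ofReal (integrableOn_exp_mul_Ioi h_neg q)
    (ae_of_all _ fun _ ↦ (exp_pos _).le), integral_exp_mul_Ioi h_neg, neg_div_neg_eq,
    ← ENNReal.ofReal_mul (inv_nonneg.2 hx.le), inv_mul_eq_div]

lemma integrableOn_Ioi_and_integral_Ioi_of_hasDerivAt_neg {M L : ℝ → ℝ} {q : ℝ}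
    (hM_cont : ContinuousWithinAt M (Ici q) q) (hM_deriv : ∀ u ∈ Ioi q, HasDerivAt M (-L u) u)
    (hL_nonneg : ∀ u ∈ Ioi q, 0 ≤ L u) (hM_top : Tendsto M atTop (𝓝 0)) :
    IntegrableOn L (Ioi q) ∧ ∫ u in Ioi q, L u = M q := by
  have h_deriv : ∀ u ∈ Ioi q, HasDerivAt (-M) (L u) u := fun u hu ↦ by
    simpa only [neg_neg] using (hM_deriv u hu).neg
  refine ⟨integrableOn_Ioi_deriv_of_nonneg hM_cont.neg h_deriv hL_nonneg hM_top.neg, ?_⟩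
  rw [integral_Ioi_of_hasDerivAt_of_nonneg hM_cont.neg h_deriv hL_nonneg hM_top.neg]
  simp

/-- Integrating `∫ exp (-(u * x)) ∂μ = -M' u` over `u > q` turns `μ` into `x⁻¹ μ(dx)`. -/
lemma isLaplaceTransform_of_hasDerivAt {μ : Measure ℝ} [SFinite μ] (hμ_pos : ∀ᵐ x ∂μ, 0 < x)
    {L M : ℝ → ℝ} (hL_nonneg : ∀ u, 0 < u → 0 ≤ L u)
    (hμL : ∀ u, 0 < u → ∫⁻ x, ENNReal.ofReal (exp (-(u * x))) ∂μ = ENNReal.ofReal (L u))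
    (hM_cont : ContinuousWithinAt M (Ici 0) 0) (hM_zero : M 0 = 1)
    (hM_deriv : ∀ u, 0 < u → HasDerivAt M (-L u) u) (hM_top : Tendsto M atTop (𝓝 0)) :
    IsLaplaceTransform M := by
  have hL_Ioi (q : ℝ) (hq : 0 ≤ q) (u : ℝ) (hu : u ∈ Ioi q) : 0 ≤ L u :=
    hL_nonneg u (hq.trans_lt hu)
  have hM_integral (q : ℝ) (hq : 0 ≤ q) : IntegrableOn L (Ioi q) ∧ ∫ u in Ioi q, L u = M q := by
    refine integrableOn_Ioi_and_integral_Ioi_of_hasDerivAt_neg ?_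
      (fun u hu ↦ hM_deriv u (hq.trans_lt hu)) (hL_Ioi q hq) hM_top
    rcases hq.eq_or_lt with rfl | hq
    exacts [hM_cont, (hM_deriv q hq).continuousAt.continuousWithinAt]
  have hM_lintegral (q : ℝ) (hq : 0 ≤ q) :
      ∫⁻ x, ENNReal.ofReal x⁻¹ * ENNReal.ofReal (exp (-(q * x))) ∂μ = ENNReal.ofReal (M q) :=
    calc
      _ = ∫⁻ x, (∫⁻ u in Ioi q, ENNReal.ofReal (exp (-(u * x)))) ∂μ := by
        refine lintegral_congr_ae ?_
        filter_upwards [hμ_pos] with x hx using (lintegral_Ioi_exp_neg_mul hx q).symm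
      _ = ∫⁻ u in Ioi q, (∫⁻ x, ENNReal.ofReal (exp (-(u * x))) ∂μ) :=
        lintegral_lintegral_swap (by unfold Function.uncurry; fun_prop)
      _ = ∫⁻ u in Ioi q, ENNReal.ofReal (L u) :=
        setLIntegral_congr_fun measurableSet_Ioi fun u hu ↦ hμL u (hq.trans_lt hu)
      _ = ENNReal.ofReal (M q) := by
        rw [← (hM_integral q hq).2, ofReal_integral_eq_lintegral_ofReal (hM_integral q hq).1
          (ae_restrict_of_forall_mem measurableSet_Ioi (hL_Ioi q hq))]
  have h_meas : Measurable fun x : ℝ ↦ ENNReal.ofReal x⁻¹ := by fun_prop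
  refine ⟨μ.withDensity fun x ↦ ENNReal.ofReal x⁻¹, ⟨?_⟩,
    (withDensity_absolutelyContinuous _ _).ae_le hμ_pos, fun q hq ↦ ?_⟩
  · rw [withDensity_apply _ MeasurableSet.univ, Measure.restrict_univ]
    simpa [hM_zero] using hM_lintegral 0 le_rfl
  · rw [integral_eq_lintegral_of_nonneg_ae (ae_of_all _ fun _ ↦ (exp_pos _).le) (by fun_prop),
      lintegral_withDensity_eq_lintegral_mul _ h_meas (by fun_prop)]
    simp only [Pi.mul_apply]
    rw [hM_lintegral q hq.le, ENNReal.toReal_ofReal]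
    exact (hM_integral q hq.le).2 ▸ setIntegral_nonneg measurableSet_Ioi (hL_Ioi q hq.le)

lemma integrableOn_rpow_sub_one_mul_exp_neg_mul {a r : ℝ} (ha : 0 < a) (hr : 0 < r) :
    IntegrableOn (fun x ↦ x ^ (a - 1) * exp (-(r * x))) (Ioi 0) := by
  refine Integrable.of_integral_ne_zero ?_
  rw [integral_rpow_mul_exp_neg_mul_Ioi ha hr]
  have := Gamma_pos_of_pos ha
  positivity

lemma integrableOn_and_integral_rpow_mul_one_sub_exp_mul_exp {a u : ℝ} (ha : 0 < a)
    (hu : 0 < u) :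
    IntegrableOn (fun x ↦ x ^ (a - 1) * (1 - exp (-x)) * exp (-(u * x))) (Ioi 0) ∧
    ∫ x in Ioi 0, x ^ (a - 1) * (1 - exp (-x)) * exp (-(u * x)) =
      (u ^ (-a) - (1 + u) ^ (-a)) * Gamma a := by
  have hu' : 0 < 1 + u := by positivity
  have h_sub (x : ℝ) : x ^ (a - 1) * (1 - exp (-x)) * exp (-(u * x)) =
      x ^ (a - 1) * exp (-(u * x)) - x ^ (a - 1) * exp (-((1 + u) * x)) := by
    rw [show -((1 + u) * x) = -x + -(u * x) by ring, exp_add]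
    ring
  have h_int := integrableOn_rpow_sub_one_mul_exp_neg_mul ha hu
  have h_int' := integrableOn_rpow_sub_one_mul_exp_neg_mul ha hu'
  simp only [h_sub]
  refine ⟨h_int.sub h_int', ?_⟩
  rw [integral_sub h_int h_int', integral_rpow_mul_exp_neg_mul_Ioi ha hu,
    integral_rpow_mul_exp_neg_mul_Ioi ha hu', one_div, one_div, inv_rpow hu.le, inv_rpow hu'.le,
    rpow_neg hu.le, rpow_neg hu'.le, sub_mul]

lemma exists_measure_lintegral_exp_eq_rpow_neg_sub_rpow_neg {a c : ℝ} (ha : 0 < a) (hc : 0 ≤ c) :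
    ∃ μ : Measure ℝ, SFinite μ ∧ (∀ᵐ x ∂μ, 0 < x) ∧
      ∀ u, 0 < u → ∫⁻ x, ENNReal.ofReal (exp (-(u * x))) ∂μ =
        ENNReal.ofReal (c * (u ^ (-a) - (1 + u) ^ (-a))) := by
  have h_nonneg : ∀ x ∈ Ioi (0 : ℝ), 0 ≤ x ^ (a - 1) * (1 - exp (-x)) := fun x (hx : 0 < x) ↦
    mul_nonneg (by positivity) (by simpa using hx.le)
  have h_meas : Measurable fun x ↦
      ENNReal.ofReal (c / Gamma a * (x ^ (a - 1) * (1 - exp (-x)))) := by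
    fun_prop
  have := Gamma_pos_of_pos ha
  refine ⟨(volume.restrict (Ioi 0)).withDensity fun x ↦
    ENNReal.ofReal (c / Gamma a * (x ^ (a - 1) * (1 - exp (-x)))), inferInstance,
    (withDensity_absolutelyContinuous _ _).ae_le (ae_restrict_mem measurableSet_Ioi), fun u hu ↦ ?_⟩
  obtain ⟨h_int, h_eq⟩ := integrableOn_and_integral_rpow_mul_one_sub_exp_mul_exp ha hu
  calc
    _ = ∫⁻ x in Ioi 0, ENNReal.ofReal
        (c / Gamma a * (x ^ (a - 1) * (1 - exp (-x)) * exp (-(u * x)))) := by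
      rw [lintegral_withDensity_eq_lintegral_mul _ h_meas (by fun_prop)]
      refine setLIntegral_congr_fun measurableSet_Ioi fun x hx ↦ ?_
      rw [← mul_assoc, ENNReal.ofReal_mul (mul_nonneg (by positivity) (h_nonneg x hx))]
      rfl
    _ = ENNReal.ofReal (c * (u ^ (-a) - (1 + u) ^ (-a))) := by
      rw [← ofReal_integral_eq_lintegral_ofReal (h_int.const_mul _)
        (ae_restrict_of_forall_mem measurableSet_Ioi fun x hx ↦
          mul_nonneg (by positivity) (mul_nonneg (h_nonneg x hx) (exp_pos _).le)),
        integral_const_mul, h_eq]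
      congr 1
      field_simp

lemma tendsto_one_add_rpow_sub_rpow_atTop {ρ : ℝ} (hρ : 0 < ρ) (hρ1 : ρ < 1) :
    Tendsto (fun q : ℝ ↦ (1 + q) ^ ρ - q ^ ρ) atTop (𝓝 0) := by
  have h_lim : Tendsto (fun q : ℝ ↦ ρ * q ^ (-(1 - ρ))) atTop (𝓝 0) := by
    simpa only [mul_zero] using (tendsto_rpow_neg_atTop (sub_pos.2 hρ1)).const_mul ρ
  refine tendsto_of_tendsto_of_tendsto_of_le_of_le' tendsto_const_nhds h_lim ?_ ?_
  · filter_upwards [eventually_gt_atTop 0] with q hq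
    have : q ^ ρ ≤ (1 + q) ^ ρ := rpow_le_rpow hq.le (by linarith) hρ.le
    linarith
  · filter_upwards [eventually_gt_atTop 0] with q hq
    calc (1 + q) ^ ρ - q ^ ρ = q ^ ρ * ((1 + q⁻¹) ^ ρ - 1) := by
          rw [mul_sub, ← mul_rpow hq.le (by positivity), mul_one_add, mul_inv_cancel₀ hq.ne',
            add_comm, mul_one]
      _ ≤ q ^ ρ * (ρ * q⁻¹) := by
          have := rpow_one_add_le_one_add_mul_self
            (neg_one_lt_zero.le.trans (inv_pos.2 hq).le) hρ.le hρ1.le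
          gcongr
          linarith
      _ = ρ * q ^ (-(1 - ρ)) := by
          rw [neg_sub, rpow_sub_one hq.ne']
          ring

lemma isLaplaceTransform_one_add_rpow_sub_rpow {ρ : ℝ} (hρ : 0 < ρ) (hρ1 : ρ < 1) :
    IsLaplaceTransform fun q ↦ (1 + q) ^ ρ - q ^ ρ := by
  obtain ⟨μ, _, hμ_pos, hμL⟩ :=
    exists_measure_lintegral_exp_eq_rpow_neg_sub_rpow_neg (sub_pos.2 hρ1) hρ.le
  refine isLaplaceTransform_of_hasDerivAt hμ_pos (fun u hu ↦ ?_) hμL ?_ ?_ (fun u hu ↦ ?_) ?_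
  · refine mul_nonneg hρ.le (sub_nonneg.2 ?_)
    exact rpow_le_rpow_of_nonpos hu (by linarith) (by linarith)
  · have := continuous_rpow_const hρ.le
    exact Continuous.continuousWithinAt (by fun_prop)
  · simp [zero_rpow hρ.ne']
  · have hu' : 1 + u ≠ 0 := by positivity
    refine ((((hasDerivAt_id u).const_add 1).rpow_const (p := ρ) (Or.inl hu')).sub
      (hasDerivAt_rpow_const (Or.inl hu.ne'))).congr_deriv ?_
    rw [id, neg_sub]
    ring
  · exact tendsto_one_add_rpow_sub_rpow_atTop hρ hρ1

lemma tendsto_one_sub_one_add_rpow_sub_rpow_div_rpow {ρ : ℝ} (hρ : 0 < ρ) (hρ1 : ρ < 1) :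
    Tendsto (fun q : ℝ ↦ (1 - ((1 + q) ^ ρ - q ^ ρ)) / q ^ ρ) (𝓝[>] 0) (𝓝 1) := by
  have h_lim : Tendsto (fun q : ℝ ↦ 1 - ρ * q ^ (1 - ρ)) (𝓝[>] 0) (𝓝 1) := by
    have : Continuous fun q : ℝ ↦ 1 - ρ * q ^ (1 - ρ) := by
      have := continuous_rpow_const (sub_pos.2 hρ1).le
      fun_prop
    simpa [zero_rpow (sub_pos.2 hρ1).ne'] using (this.tendsto 0).mono_left nhdsWithin_le_nhds
  refine tendsto_of_tendsto_of_tendsto_of_le_of_le' h_lim tendsto_const_nhds ?_ ?_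
  all_goals
    filter_upwards [self_mem_nhdsWithin] with q (hq : 0 < q)
    have := rpow_pos_of_pos hq ρ
  · rw [le_div_iff₀ this, sub_mul, mul_assoc, ← rpow_add hq]
    have := rpow_one_add_le_one_add_mul_self (neg_one_lt_zero.le.trans hq.le) hρ.le hρ1.le
    rw [sub_add_cancel, rpow_one]
    linarith
  · rw [div_le_one this]
    have := one_le_rpow (show 1 ≤ 1 + q by linarith) hρ.le
    linarith

lemma isLaplaceTransform_exp_neg_rpow {ρ : ℝ} (hρ : 0 < ρ) (hρ1 : ρ < 1) :
    IsLaplaceTransform fun q ↦ exp (-q ^ ρ) :=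
  (isLaplaceTransform_one_add_rpow_sub_rpow hρ hρ1).exp_neg_rpow_of_tendsto hρ one_pos
    (tendsto_one_sub_one_add_rpow_sub_rpow_div_rpow hρ hρ1)

lemma toReal_gammaPDF_mul_exp_neg_mul {p : ℝ} (hp : 0 < p) (u x : ℝ) :
    (gammaPDF p 1 x).toReal * exp (-(u * x)) = (Ici (0 : ℝ)).indicator
      (fun x ↦ (Gamma p)⁻¹ * (x ^ (p - 1) * exp (-((1 + u) * x)))) x := by
  rw [gammaPDF, ENNReal.toReal_ofReal (gammaPDFReal_nonneg hp one_pos x), gammaPDFReal]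
  by_cases hx : 0 ≤ x
  · rw [if_pos hx, indicator_of_mem (mem_Ici.2 hx), one_rpow,
      show -((1 + u) * x) = -(1 * x) + -(u * x) by ring, exp_add]
    ring
  · rw [if_neg hx, indicator_of_notMem (by simpa using hx), zero_mul]

lemma integral_exp_neg_mul_gammaMeasure {p u : ℝ} (hp : 0 < p) (hu : 0 ≤ u) :
    ∫ x, exp (-(u * x)) ∂gammaMeasure p 1 = (1 + u) ^ (-p) := by
  have hu' : 0 < 1 + u := by positivity
  have h_meas : Measurable (gammaPDF p 1) := (measurable_gammaPDFReal p 1).ennreal_ofReal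
  rw [gammaMeasure, integral_withDensity_eq_integral_toReal_smul h_meas
    (ae_of_all _ fun _ ↦ ENNReal.ofReal_lt_top)]
  simp only [smul_eq_mul, toReal_gammaPDF_mul_exp_neg_mul hp]
  rw [integral_indicator measurableSet_Ici, integral_Ici_eq_integral_Ioi, integral_const_mul,
    integral_rpow_mul_exp_neg_mul_Ioi hp hu', one_div, inv_rpow hu'.le, rpow_neg hu'.le]
  have := Gamma_pos_of_pos hp
  field_simp

lemma ae_pos_gammaMeasure (p r : ℝ) : ∀ᵐ x ∂gammaMeasure p r, 0 < x := by
  rw [ae_iff]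
  simp only [not_lt]
  change gammaMeasure p r (Iic 0) = 0
  rw [gammaMeasure, withDensity_apply _ measurableSet_Iic, setLIntegral_congr Iio_ae_eq_Iic.symm]
  exact lintegral_gammaPDF_of_nonpos le_rfl

lemma isLaplaceTransform_one_add_rpow_neg {p : ℝ} (hp : 0 < p) :
    IsLaplaceTransform fun u ↦ (1 + u) ^ (-p) :=
  ⟨gammaMeasure p 1, isProbabilityMeasure_gammaMeasure hp one_pos, ae_pos_gammaMeasure p 1,
    fun _ hu ↦ integral_exp_neg_mul_gammaMeasure hp hu.le⟩

namespace IsLaplaceTransform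

variable {L M : ℝ → ℝ}

lemma comp_rpow (hL : IsLaplaceTransform L) {ρ : ℝ} (hρ : 0 < ρ) (hρ1 : ρ ≤ 1) :
    IsLaplaceTransform fun q ↦ L (q ^ ρ) := by
  rcases hρ1.eq_or_lt with rfl | hρ1
  · simpa only [rpow_one] using hL
  obtain ⟨μ, _, hμ_pos, hμL⟩ := hL
  refine ((isLaplaceTransform_exp_neg_rpow hρ hρ1).integral_comp_mul (P := μ)
    (Y := fun y ↦ y ^ ρ⁻¹) (by fun_prop) ?_).congr fun q hq ↦ ?_
  · filter_upwards [hμ_pos] with y hy using rpow_pos_of_pos hy _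
  · rw [← hμL _ (rpow_pos_of_pos hq ρ)]
    refine integral_congr_ae ?_
    filter_upwards [hμ_pos] with y hy
    rw [mul_rpow hq.le (by positivity), rpow_inv_rpow hy.le hρ.ne']

lemma of_hasDerivAt (hL : IsLaplaceTransform L) (hM_cont : ContinuousWithinAt M (Ici 0) 0)
    (hM_zero : M 0 = 1) (hM_deriv : ∀ u, 0 < u → HasDerivAt M (-L u) u)
    (hM_top : Tendsto M atTop (𝓝 0)) : IsLaplaceTransform M := by
  obtain ⟨μ, _, hμ_pos, hμL⟩ := hL
  refine isLaplaceTransform_of_hasDerivAt hμ_pos (fun u hu ↦ ?_) (fun u hu ↦ ?_) hM_cont hM_zero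
    hM_deriv hM_top
  · exact hμL u hu ▸ integral_nonneg fun _ ↦ (exp_pos _).le
  · have h_int : Integrable (fun x ↦ exp (-(u * x))) μ :=
      integrable_exp_neg_mul aemeasurable_id (hμ_pos.mono fun _ ↦ le_of_lt) hu.le
    rw [← hμL u hu, ofReal_integral_eq_lintegral_ofReal h_int (ae_of_all _ fun _ ↦ (exp_pos _).le)]

end IsLaplaceTransform

lemma mul_one_add_rpow_rpow_neg_inv {α u : ℝ} (hα : α ≠ 0) (hu : 0 < u) :
    u * (1 + u ^ α) ^ (-α⁻¹) = (1 + u ^ (-α)) ^ (-α⁻¹) := by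
  have h_factor : 1 + u ^ α = u ^ α * (1 + u ^ (-α)) := by
    rw [mul_add, mul_one, ← rpow_add hu, add_neg_cancel, rpow_zero, add_comm]
  rw [h_factor, mul_rpow (by positivity) (by positivity), ← rpow_mul hu.le, mul_neg,
    mul_inv_cancel₀ hα, rpow_neg_one, mul_inv_cancel_left₀ hu.ne']

lemma hasDerivAt_mul_one_add_rpow_rpow_neg_inv {α u : ℝ} (hα : α ≠ 0) (hu : 0 < u) :
    HasDerivAt (fun u ↦ u * (1 + u ^ α) ^ (-α⁻¹)) ((1 + u ^ α) ^ (-(1 + α⁻¹))) u := by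
  have h_pos : 0 < 1 + u ^ α := by positivity
  refine ((hasDerivAt_id u).mul (((hasDerivAt_rpow_const (Or.inl hu.ne')).const_add 1).rpow_const
    (p := -α⁻¹) (Or.inl h_pos.ne'))).congr_deriv ?_
  have h_exp : -α⁻¹ = -(1 + α⁻¹) + 1 := by ring
  rw [h_exp, add_sub_cancel_right, rpow_add_one h_pos.ne', rpow_sub_one hu.ne']
  simp only [id]
  field_simp
  ring

lemma tendsto_mul_one_add_rpow_rpow_neg_inv_atTop {α : ℝ} (hα : 0 < α) :
    Tendsto (fun u : ℝ ↦ u * (1 + u ^ α) ^ (-α⁻¹)) atTop (𝓝 1) := by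
  have h_lim : Tendsto (fun u : ℝ ↦ (1 + u ^ (-α)) ^ (-α⁻¹)) atTop (𝓝 ((1 + 0) ^ (-α⁻¹))) :=
    ((tendsto_rpow_neg_atTop hα).const_add 1).rpow_const (Or.inl (by norm_num))
  rw [add_zero, one_rpow] at h_lim
  refine h_lim.congr' ?_
  filter_upwards [eventually_gt_atTop 0] with u hu
  exact (mul_one_add_rpow_rpow_neg_inv hα.ne' hu).symm

lemma isLaplaceTransform_one_sub_one_add_rpow_neg_rpow_neg_inv {α : ℝ} (hα : 0 < α) (hα1 : α ≤ 1) :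
    IsLaplaceTransform fun q ↦ 1 - (1 + q ^ (-α)) ^ (-α⁻¹) := by
  have h_gamma : IsLaplaceTransform fun u ↦ (1 + u ^ α) ^ (-(1 + α⁻¹)) :=
    (isLaplaceTransform_one_add_rpow_neg (by positivity)).comp_rpow hα hα1
  have h_tilt : IsLaplaceTransform fun q ↦ 1 - q * (1 + q ^ α) ^ (-α⁻¹) := by
    refine h_gamma.of_hasDerivAt ?_ (by simp)
      (fun u hu ↦ (hasDerivAt_mul_one_add_rpow_rpow_neg_inv hα.ne' hu).const_sub 1) ?_
    · refine (continuousWithinAt_id.mul (ContinuousWithinAt.rpow_const ?_ (Or.inl ?_))).const_sub 1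
      · exact ((continuous_rpow_const hα.le).const_add 1).continuousWithinAt
      · simp [zero_rpow hα.ne']
    · simpa only [sub_self] using (tendsto_mul_one_add_rpow_rpow_neg_inv_atTop hα).const_sub 1
  exact h_tilt.congr fun q hq ↦ by rw [mul_one_add_rpow_rpow_neg_inv hα.ne' hq]

lemma exists_measure_integral_one_sub_exp_eq {α ρ : ℝ} (hα : 0 < α) (hα1 : α ≤ 1) (hρ : 0 < ρ)
    (hρ1 : ρ ≤ 1) :
    ∃ F : Measure ℝ, IsProbabilityMeasure F ∧ F (Iic 0) = 0 ∧
      ∀ q : ℝ, 0 < q → ∫ x in Ioi (0 : ℝ), (1 - exp (-(q * x))) ∂F =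
        (1 + q ^ (-(ρ * α))) ^ (-(1 / α)) := by
  obtain ⟨F, hF, hF_pos, hFL⟩ :=
    (isLaplaceTransform_one_sub_one_add_rpow_neg_rpow_neg_inv hα hα1).comp_rpow hρ hρ1
  refine ⟨F, hF, ?_, fun q hq ↦ ?_⟩
  · simpa only [ae_iff, not_lt] using! hF_pos
  · have h_restrict : F.restrict (Ioi 0) = F := Measure.restrict_eq_self_of_ae_mem hF_pos
    have h_int : Integrable (fun x ↦ exp (-(q * x))) F :=
      integrable_exp_neg_mul aemeasurable_id (hF_pos.mono fun _ ↦ le_of_lt) hq.le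
    rw [h_restrict, integral_sub (integrable_const _) h_int, hFL q hq]
    simp [← rpow_mul hq.le]

lemma setIntegral_one_sub_exp_smul_map_div (F : Measure ℝ) {a b : ℝ} (ha : 0 ≤ a) (hb : 0 < b)
    (q : ℝ) :
    ∫ x in Ioi (0 : ℝ), (1 - exp (-(q * x))) ∂(ENNReal.ofReal a • F.map fun x ↦ x / b) =
      a * ∫ x in Ioi (0 : ℝ), (1 - exp (-(q / b * x))) ∂F := by
  have h_preimage : (fun x : ℝ ↦ x / b) ⁻¹' Ioi 0 = Ioi 0 := by
    ext x
    simp [div_pos_iff_of_pos_right hb]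
  rw [Measure.restrict_smul, integral_smul_measure, ENNReal.toReal_ofReal ha,
    Measure.restrict_map (by fun_prop) measurableSet_Ioi, h_preimage,
    integral_map (by fun_prop) (by fun_prop), smul_eq_mul]
  simp only [div_mul_eq_mul_div, mul_div_assoc]

lemma rpow_mul_one_add_div_rpow_rpow {γ ρ T q : ℝ} (hγ : γ ≠ 1) (hρ : ρ ≠ 0) (hT : 0 < T)
    (hq : 0 < q) :
    T ^ (1 / (1 - γ)) *
        (1 + (q / (T ^ (1 / (1 - γ))) ^ (1 / ρ)) ^ (-(ρ * (γ - 1)))) ^ (-(1 / (γ - 1))) =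
      (T + q ^ (-(ρ * (γ - 1)))) ^ (-(1 / (γ - 1))) := by
  have hγ' : 1 - γ ≠ 0 := sub_ne_zero.2 hγ.symm
  have : γ - 1 ≠ 0 := sub_ne_zero.2 hγ
  have h_scale : ((T ^ (1 / (1 - γ))) ^ (1 / ρ)) ^ (-(ρ * (γ - 1))) = T := by
    rw [← rpow_mul hT.le, ← rpow_mul hT.le,
      show 1 / (1 - γ) * (1 / ρ) * -(ρ * (γ - 1)) = 1 by field_simp; ring, rpow_one]
  rw [div_rpow hq.le (by positivity), h_scale, show 1 / (1 - γ) = -(1 / (γ - 1)) by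
    rw [← neg_sub, one_div, one_div, inv_neg], ← mul_rpow hT.le (by positivity), mul_one_add,
    mul_div_cancel₀ _ hT.ne']

lemma hasDerivAt_rpow_neg_inv_bernoulli {γ β Q t : ℝ} (hγ : γ ≠ 1)
    (h : 0 < (γ - 1) * β * t + Q) :
    HasDerivAt (fun s ↦ ((γ - 1) * β * s + Q) ^ (-(1 / (γ - 1))))
      (-β * (((γ - 1) * β * t + Q) ^ (-(1 / (γ - 1)))) ^ γ) t := by
  have hγ' : γ - 1 ≠ 0 := sub_ne_zero.2 hγ
  refine ((((hasDerivAt_id t).const_mul ((γ - 1) * β)).add_const Q).rpow_const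
    (p := -(1 / (γ - 1))) (Or.inl h.ne')).congr_deriv ?_
  rw [← rpow_mul h.le, show -(1 / (γ - 1)) * γ = -(1 / (γ - 1)) - 1 by field_simp; ring]
  simp only [id]
  field_simp

lemma tendsto_mul_add_rpow_nhdsGT_zero (k p : ℝ) {Q : ℝ} (hQ : Q ≠ 0) :
    Tendsto (fun t ↦ (k * t + Q) ^ p) (𝓝[>] 0) (𝓝 (Q ^ p)) := by
  have h_cont : Continuous fun t : ℝ ↦ k * t + Q := by fun_prop
  have h_lim : Tendsto (fun t ↦ k * t + Q) (𝓝 0) (𝓝 Q) := by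
    simpa only [mul_zero, zero_add] using h_cont.tendsto 0
  exact (h_lim.rpow_const (Or.inl hQ)).mono_left nhdsWithin_le_nhds

/-- existence of the generalized Mittag-Leffler probability
measure `F_{γ,ρ}` and the associated self-similar solutions
`μ_t(A) = a(t) F(a(t)^{1/ρ} A)`, `a(t) = [(γ-1)βt]^{1/(1-γ)}`, whose Laplace
exponent is `φ(t,q) = [(γ-1)βt + q^{-ρ(γ-1)}]^{-1/(γ-1)}`, which solves
`∂_t φ = -β φ^γ` with `φ(0⁺,q) = q^ρ`. -/
theorem mittag_leffler_self_similar_solutions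
    (γ β ρ : ℝ) (hγ : 1 < γ ∧ γ ≤ 2) (hβ : 0 < β) (hρ : 0 < ρ ∧ ρ ≤ 1) :
    ∃ F : Measure ℝ, IsProbabilityMeasure F ∧ F (Iic 0) = 0 ∧
      (∀ q : ℝ, 0 < q →
        ∫ x in Ioi (0:ℝ), (1 - exp (-(q * x))) ∂F
          = (1 + q ^ (-(ρ * (γ - 1)))) ^ (-(1 / (γ - 1)))) ∧
      (∀ t : ℝ, 0 < t → ∀ q : ℝ, 0 < q →
        ∫ x in Ioi (0:ℝ), (1 - exp (-(q * x)))
            ∂(ENNReal.ofReal (((γ - 1) * β * t) ^ (1 / (1 - γ))) •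
              Measure.map (fun x => x / ((((γ - 1) * β * t) ^ (1 / (1 - γ))) ^ (1 / ρ))) F)
          = ((γ - 1) * β * t + q ^ (-(ρ * (γ - 1)))) ^ (-(1 / (γ - 1)))) ∧
      (∀ q : ℝ, 0 < q → ∀ t : ℝ, 0 < t →
        HasDerivAt
          (fun s => ((γ - 1) * β * s + q ^ (-(ρ * (γ - 1)))) ^ (-(1 / (γ - 1))))
          (-β * (((γ - 1) * β * t + q ^ (-(ρ * (γ - 1)))) ^ (-(1 / (γ - 1)))) ^ γ) t) ∧
      (∀ q : ℝ, 0 < q →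
        Tendsto (fun t => ((γ - 1) * β * t + q ^ (-(ρ * (γ - 1)))) ^ (-(1 / (γ - 1))))
          (nhdsWithin 0 (Ioi 0)) (nhds (q ^ ρ))) := by
  obtain ⟨hγ_gt, hγ_le⟩ := hγ
  obtain ⟨hρ_pos, hρ_le⟩ := hρ
  have hγ_sub : 0 < γ - 1 := sub_pos.2 hγ_gt
  obtain ⟨F, hF, hF_zero, hFL⟩ :=
    exists_measure_integral_one_sub_exp_eq hγ_sub (by linarith) hρ_pos hρ_le
  refine ⟨F, hF, hF_zero, hFL, fun t ht q hq ↦ ?_, fun q hq t ht ↦ ?_, fun q hq ↦ ?_⟩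
  · have hT : 0 < (γ - 1) * β * t := by positivity
    rw [setIntegral_one_sub_exp_smul_map_div F (by positivity) (by positivity),
      hFL _ (by positivity), rpow_mul_one_add_div_rpow_rpow hγ_gt.ne' hρ_pos.ne' hT hq]
  · exact hasDerivAt_rpow_neg_inv_bernoulli hγ_gt.ne' (by positivity)
  · have h_exp : -(ρ * (γ - 1)) * -(1 / (γ - 1)) = ρ := by field_simp
    simpa only [← rpow_mul hq.le, h_exp] using tendsto_mul_add_rpow_nhdsGT_zero
      ((γ - 1) * β) (-(1 / (γ - 1))) (rpow_pos_of_pos hq (-(ρ * (γ - 1)))).ne'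
end
end
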